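/- Let G be a graph with n vertices. For every S ⊆ V(G), the tree T_S obtained from T(G) by applying, at each cut 'v ≤ 0' with v ∉ S, the raising operation keeping the child that continues the path (so that exactly the cuts 'v ≤ 0' for v ∈ S together with the cut 'd* ≤ 0' remain) misclassifies precisely the blue edge examples corresponding to the edges of G having no endpoint in S and classifies all other examples correctly; in particular, the number of errors of T_S on E(G) equals the number of edges of G not covered by S. -/

import Mathlib

/-- The two class labels. -/
inductive Label where
  | blue
  | red
deriving DecidableEq

/-- A decision tree over examples `ι → ℝ` with classes `{blue, red}`:
every inner node carries a feature and a threshold, every leaf a class label.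
An example goes to the left child if its value in the node's feature is at most
the threshold, and to the right child otherwise. -/
inductive DTree (ι : Type) where
  | leaf (c : Label)
  | node (feat : ι) (thr : ℝ) (left right : DTree ι)

namespace DTree

variable {ι : Type}

/-- The class that a decision tree assigns to an example. -/
noncomputable def classify : DTree ι → (ι → ℝ) → Label
  | .leaf c, _ => c
  | .node f t l r, e => if e f ≤ t then l.classify e else r.classify e

/-- The routing path of an example (`false` = left child, `true` = right child);
it is the position of the leaf of the example. -/
noncomputable def route : DTree ι → (ι → ℝ) → List Bool
  | .leaf _, _ => []
  | .node f t l r, e => if e f ≤ t then false :: l.route e else true :: r.route e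

/-- The subtree rooted at a position (`none` if the position is not a node). -/
def subtreeAt : DTree ι → List Bool → Option (DTree ι)
  | T, [] => some T
  | .leaf _, _ :: _ => none
  | .node _ _ l r, b :: p => (if b then r else l).subtreeAt p

/-- Replace the subtree at a given position by another tree. -/
def replaceAt : DTree ι → List Bool → DTree ι → DTree ι
  | _, [], T' => T'
  | .leaf c, _ :: _, _ => .leaf c
  | .node f t l r, b :: p, T' =>
      if b then .node f t l (r.replaceAt p T') else .node f t (l.replaceAt p T') r

/-- The number of inner nodes of a decision tree. -/
def innerCount : DTree ι → ℕ
  | .leaf _ => 0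
  | .node _ _ l r => 1 + l.innerCount + r.innerCount

/-- The position `p` is an inner node of `T`. -/
def IsInnerPos (T : DTree ι) (p : List Bool) : Prop :=
  ∃ f t l r, T.subtreeAt p = some (.node f t l r)

/-- The position `p` is a node of `T`. -/
def IsNodePos (T : DTree ι) (p : List Bool) : Prop :=
  (T.subtreeAt p).isSome

/-- The feature and threshold of the inner node at position `p`. -/
def cutAt (T : DTree ι) (p : List Bool) : Option (ι × ℝ) :=
  match T.subtreeAt p with
  | some (.node f t _ _) => some (f, t)
  | _ => none

/-- The subtree raising operation at position `q` keeping the child in direction `b`: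
the subtree rooted at `q` is replaced by the subtree rooted at its `b`-child; it prunes
the node at `q` together with all inner nodes of the subtree rooted at the other child. -/
def raiseAt (T : DTree ι) (q : List Bool) (b : Bool) : DTree ι :=
  match T.subtreeAt q with
  | some (.node _ _ l r) => T.replaceAt q (if b then r else l)
  | _ => T

end DTree

/-- `E[T,p]`: the examples of `E` whose routing through `T` passes the position `p`. -/
noncomputable def reach {ι : Type} (E : Finset (ι → ℝ)) (T : DTree ι) (p : List Bool) :
    Finset (ι → ℝ) :=
  E.filter fun e => p <+: T.route e

/-- The number of errors of `T` on the training set `(E, lab)`. -/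
noncomputable def errCount {ι : Type} (T : DTree ι) (E : Finset (ι → ℝ))
    (lab : (ι → ℝ) → Label) : ℕ :=
  (E.filter fun e => T.classify e ≠ lab e).card

/-- A most frequent label of the labeled set `(E, lab)` (blue in case of a tie). -/
def majorityLabel {ι : Type} (E : Finset (ι → ℝ)) (lab : (ι → ℝ) → Label) : Label :=
  if (E.filter fun e => lab e = Label.red).card ≤ (E.filter fun e => lab e = Label.blue).card
  then Label.blue else Label.red

/-- One subtree replacement operation: some inner node of `T` is replaced by a leaf
labeled with a most frequent label of the examples reaching it. -/
def ReplStep {ι : Type} (E : Finset (ι → ℝ)) (lab : (ι → ℝ) → Label)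
    (T T' : DTree ι) : Prop :=
  ∃ p, T.IsInnerPos p ∧
    T' = T.replaceAt p (.leaf (majorityLabel (reach E T p) lab))

/-- `T` is a reasonable decision tree for `(E, lab)`: every node is reached by some
example and every leaf carries a most frequent label of the examples reaching it. -/
def Reasonable {ι : Type} (E : Finset (ι → ℝ)) (lab : (ι → ℝ) → Label)
    (T : DTree ι) : Prop :=
  (∀ p, T.IsNodePos p → (reach E T p).Nonempty) ∧
  (∀ p c, T.subtreeAt p = some (.leaf c) → ∀ c' : Label,
    ((reach E T p).filter fun e => lab e = c').card ≤
      ((reach E T p).filter fun e => lab e = c).card)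

/-- Apply a sequence of raising operations (given by positions and kept directions). -/
def applySeq {ι : Type} : DTree ι → List (List Bool × Bool) → DTree ι
  | T, [] => T
  | T, (q, b) :: rest => applySeq (T.raiseAt q b) rest

/-- Each raising operation of the sequence is applied at an inner node. -/
def ValidSeq {ι : Type} : DTree ι → List (List Bool × Bool) → Prop
  | _, [] => True
  | T, (q, b) :: rest => T.IsInnerPos q ∧ ValidSeq (T.raiseAt q b) rest

/-- The total number of inner nodes pruned by a sequence of raising operations. -/
def seqPruned {ι : Type} : DTree ι → List (List Bool × Bool) → ℕ
  | _, [] => 0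
  | T, (q, b) :: rest =>
      (match T.subtreeAt q with
        | some (.node _ _ l r) => 1 + DTree.innerCount (if b then l else r)
        | _ => 0) + seqPruned (T.raiseAt q b) rest

/-- `T'` is obtained from `T` by a (possibly empty) sequence of subtree raising
operations. -/
def RaisedFrom {ι : Type} (T T' : DTree ι) : Prop :=
  ∃ steps, ValidSeq T steps ∧ applySeq T steps = T'

/-- `T'` is obtained from `T` by a sequence of subtree raising operations pruning
exactly `m` inner nodes in total. -/
def RaisedFromPruning {ι : Type} (T : DTree ι) (m : ℕ) (T' : DTree ι) : Prop :=
  ∃ steps, ValidSeq T steps ∧ seqPruned T steps = m ∧ applySeq T steps = T'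

/-- Tracking the position of a node through one raising operation: nodes strictly
below the raised node on the discarded side, and the raised node itself, are pruned
(`none`); all other nodes survive at a possibly shifted position. -/
def stepMap (q : List Bool) (b : Bool) (p : List Bool) : Option (List Bool) :=
  if q <+: p then
    if q ++ [b] <+: p then some (q ++ p.drop (q.length + 1)) else none
  else some p

/-- Tracking the position of a node through a sequence of raising operations. -/
def seqMap : List (List Bool × Bool) → List Bool → Option (List Bool)
  | [], p => some p
  | (q, b) :: rest, p => (stepMap q b p).bind (seqMap rest)

/-- The number of errors of `T` on a multiset of labeled examples. -/
noncomputable def errCountM {ι : Type} (T : DTree ι) (E : Multiset ((ι → ℝ) × Label)) : ℕ :=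
  (E.filter fun q => T.classify q.1 ≠ q.2).card

/-- The 0/1 indicator vector of a set of coordinates. -/
def indVec {m : ℕ} (S : Finset (Fin m)) : Fin m → ℝ := fun i => if i ∈ S then 1 else 0

/-- The blue edge example of an edge `{v, w}`: value `1` exactly in the
coordinates `v` and `w`. -/
def edgeEx (n : ℕ) : Sym2 (Fin n) → (Fin (n + 1) → ℝ) :=
  Sym2.lift ⟨fun v w => indVec {v.castSucc, w.castSucc},
    fun v w => by simp only []; rw [Finset.pair_comm]⟩

/-- The blue vertex example of a vertex `v`: value `1` exactly in the coordinates
`v` and `d*` (the last coordinate). -/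
def vertEx (n : ℕ) (v : Fin n) : Fin (n + 1) → ℝ := indVec {v.castSucc, Fin.last n}

/-- The blue example with value `1` only in the coordinate `d*`. -/
def starEx (n : ℕ) : Fin (n + 1) → ℝ := indVec {Fin.last n}

/-- The labeling: the all-zero example is red, all other examples are blue. -/
noncomputable def labG (n : ℕ) : (Fin (n + 1) → ℝ) → Label :=
  fun e => if e = (fun _ => 0) then Label.red else Label.blue

/-- The training set `E(G)` of the independent-set construction. -/
noncomputable def EG {n : ℕ} (G : SimpleGraph (Fin n)) [DecidableRel G.Adj] :
    Finset (Fin (n + 1) → ℝ) :=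
  (G.edgeFinset.image (edgeEx n)) ∪ (Finset.univ.image (vertEx n)) ∪
    {starEx n, fun _ => 0}

/-- A descending path of cuts `f ≤ 0` (for `f` in the given list) whose right
children are blue leaves and whose left children continue the path, ending in the
given tree. -/
def chainB {m : ℕ} (fs : List (Fin m)) (tail : DTree (Fin m)) : DTree (Fin m) :=
  fs.foldr (fun f acc => DTree.node f 0 acc (.leaf .blue)) tail

/-- The decision tree `T(G)`: the path of cuts `v₁ ≤ 0, …, vₙ ≤ 0, d* ≤ 0`; at each
vertex cut the right child is a blue leaf; the final cut has a red left child and a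
blue right child. -/
def TG (n : ℕ) : DTree (Fin (n + 1)) :=
  chainB (List.ofFn fun i : Fin n => i.castSucc)
    (DTree.node (Fin.last n) 0 (.leaf .red) (.leaf .blue))

/-- The tree obtained from `T(G)` by applying, at each cut `v ≤ 0` with `v ∈ R`,
the raising operation keeping the child that continues the path: the path of the
cuts `v ≤ 0` for `v ∉ R` followed by the cut `d* ≤ 0`. -/
def TGkeep (n : ℕ) (R : Finset (Fin n)) : DTree (Fin (n + 1)) :=
  chainB (((List.ofFn fun i : Fin n => i).filter fun v => decide (v ∉ R)).map Fin.castSucc)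
    (DTree.node (Fin.last n) 0 (.leaf .red) (.leaf .blue))

/-- The tree obtained from `T(G)` by applying, at each cut `v ≤ 0` with `v ∉ S`,
the raising operation keeping the child that continues the path, so that exactly
the cuts `v ≤ 0` for `v ∈ S` together with the cut `d* ≤ 0` remain. -/
def TGsel (n : ℕ) (S : Finset (Fin n)) : DTree (Fin (n + 1)) :=
  chainB (((List.ofFn fun i : Fin n => i).filter fun v => decide (v ∈ S)).map Fin.castSucc)
    (DTree.node (Fin.last n) 0 (.leaf .red) (.leaf .blue))

/-!
Every training example is the indicator vector of a set `A` of features. The tree `T_S` assigns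
red to it iff `A` misses the set `S ∪ {d*}` of features that it cuts, whereas its label is red iff
`A = ∅`. So `T_S` errs exactly when `A` is nonempty and disjoint from `S ∪ {d*}`. The examples of
the vertices and of `d*` contain `d*`, and the red example has `A = ∅`; only the edges avoiding `S`
remain, and distinct edges give distinct examples.
-/

section IndicatorVectors

variable {m : ℕ}

theorem indVec_nonpos_iff {A : Finset (Fin m)} {i : Fin m} : indVec A i ≤ 0 ↔ i ∉ A := by
  by_cases hi : i ∈ A <;> simp [indVec, hi]

theorem indVec_injective : Function.Injective (indVec (m := m)) := fun A B h =>
  Finset.ext fun i => not_iff_not.1 <| by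
    rw [← indVec_nonpos_iff, ← indVec_nonpos_iff, h]

theorem indVec_empty : indVec (∅ : Finset (Fin m)) = fun _ => 0 := by
  simp [funext_iff, indVec]

end IndicatorVectors

theorem classify_chainB {m : ℕ} (fs : List (Fin m)) (T : DTree (Fin m)) (e : Fin m → ℝ) :
    (chainB fs T).classify e = if ∀ f ∈ fs, e f ≤ 0 then T.classify e else Label.blue := by
  induction fs with
  | nil => simp [chainB]
  | cons f fs ih =>
    calc (chainB (f :: fs) T).classify e
        = if e f ≤ 0 then (chainB fs T).classify e else Label.blue := rfl
      _ = _ := by simp only [ih, List.forall_mem_cons, ite_and]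

section SelectedTree

variable {n : ℕ}

theorem edgeEx_eq_indVec (s : Sym2 (Fin n)) :
    edgeEx n s = indVec (s.toFinset.map Fin.castSuccEmb) := by
  induction s with
  | _ v w => simp [edgeEx, Sym2.toFinset_mk_eq]

theorem edgeEx_injective : Function.Injective (edgeEx n) := fun s t h => by
  rw [edgeEx_eq_indVec, edgeEx_eq_indVec] at h
  have hst : s.toFinset = t.toFinset := Finset.map_injective _ (indVec_injective h)
  exact Sym2.ext fun v => by rw [← Sym2.mem_toFinset, hst, Sym2.mem_toFinset]

/-- The set `S ∪ {d*}` of the features cut by the tree `T_S = TGsel n S`, with the vertices embedded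
by `Fin.castSucc` and `d* = Fin.last n`. -/
def cutFeatures (S : Finset (Fin n)) : Finset (Fin (n + 1)) :=
  insert (Fin.last n) (S.map Fin.castSuccEmb)

theorem classify_TGsel (S : Finset (Fin n)) (e : Fin (n + 1) → ℝ) :
    (TGsel n S).classify e =
      if ∀ i ∈ cutFeatures S, e i ≤ 0 then Label.red else Label.blue := by
  have h_cuts : (∀ i ∈ cutFeatures S, e i ≤ 0) ↔
      (∀ v ∈ S, e v.castSucc ≤ 0) ∧ e (Fin.last n) ≤ 0 := by
    simp [cutFeatures, and_comm]
  simp [TGsel, classify_chainB, DTree.classify, h_cuts, ite_and]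

theorem classify_TGsel_indVec (S : Finset (Fin n)) (A : Finset (Fin (n + 1))) :
    (TGsel n S).classify (indVec A) =
      if Disjoint A (cutFeatures S) then Label.red else Label.blue := by
  simp only [classify_TGsel, indVec_nonpos_iff, Finset.disjoint_right]

theorem labG_indVec (A : Finset (Fin (n + 1))) :
    labG n (indVec A) = if A = ∅ then Label.red else Label.blue := by
  simp only [labG, ← indVec_empty, indVec_injective.eq_iff]

theorem classify_TGsel_indVec_ne_labG_iff {S : Finset (Fin n)} {A : Finset (Fin (n + 1))} :
    (TGsel n S).classify (indVec A) ≠ labG n (indVec A) ↔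
      A.Nonempty ∧ Disjoint A (cutFeatures S) := by
  rw [classify_TGsel_indVec, labG_indVec, Finset.nonempty_iff_ne_empty]
  by_cases hA : A = ∅ <;> simp [hA]

theorem classify_TGsel_indVec_eq_labG_of_last_mem (S : Finset (Fin n))
    {A : Finset (Fin (n + 1))} (hA : Fin.last n ∈ A) :
    (TGsel n S).classify (indVec A) = labG n (indVec A) :=
  of_not_not fun h_err => Finset.disjoint_left.1 (classify_TGsel_indVec_ne_labG_iff.1 h_err).2 hA
    (Finset.mem_insert_self _ _)

theorem classify_TGsel_edgeEx_ne_labG_iff {S : Finset (Fin n)} {s : Sym2 (Fin n)} :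
    (TGsel n S).classify (edgeEx n s) ≠ labG n (edgeEx n s) ↔ ∀ v ∈ s, v ∉ S := by
  have h_nonempty : s.toFinset.Nonempty := ⟨s.out.1, Sym2.mem_toFinset.2 s.out_fst_mem⟩
  rw [edgeEx_eq_indVec, classify_TGsel_indVec_ne_labG_iff]
  simp [h_nonempty, cutFeatures, Finset.disjoint_left]

theorem filter_EG_classify_TGsel_ne_labG (G : SimpleGraph (Fin n)) [DecidableRel G.Adj]
    (S : Finset (Fin n)) :
    ((EG G).filter fun e => (TGsel n S).classify e ≠ labG n e) =
      (G.edgeFinset.filter fun s => ∀ v ∈ s, v ∉ S).image (edgeEx n) := by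
  have h_vert (v : Fin n) : (TGsel n S).classify (vertEx n v) = labG n (vertEx n v) :=
    classify_TGsel_indVec_eq_labG_of_last_mem S (by simp)
  have h_star : (TGsel n S).classify (starEx n) = labG n (starEx n) :=
    classify_TGsel_indVec_eq_labG_of_last_mem S (by simp)
  have h_zero : (TGsel n S).classify (fun _ => 0) = labG n fun _ => 0 := by
    simp [← indVec_empty, classify_TGsel_indVec, labG_indVec]
  simp only [EG, Finset.filter_union, Finset.filter_image, Finset.filter_insert,
    Finset.filter_singleton, classify_TGsel_edgeEx_ne_labG_iff, h_vert, h_star, h_zero, ne_eq,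
    not_true_eq_false, if_false, Finset.filter_false, Finset.image_empty, Finset.union_empty]

end SelectedTree

/-- For every `S ⊆ V(G)`, the tree `T_S` (obtained from `T(G)` by
raising away the cuts of the vertices outside `S`) misclassifies precisely the blue
edge examples of the edges of `G` having no endpoint in `S` and classifies all
other examples of `E(G)` correctly; in particular its number of errors on `E(G)`
equals the number of edges of `G` not covered by `S`. -/
theorem stmt9 {n : ℕ} (G : SimpleGraph (Fin n)) [DecidableRel G.Adj]
    (S : Finset (Fin n)) :
    (∀ e ∈ EG G, ((TGsel n S).classify e ≠ labG n e ↔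
        ∃ s ∈ G.edgeFinset, (∀ v : Fin n, v ∈ s → v ∉ S) ∧ e = edgeEx n s))
    ∧ errCount (TGsel n S) (EG G) (labG n)
        = (G.edgeFinset.filter fun s => ∀ v : Fin n, v ∈ s → v ∉ S).card := by
  have h_filter := filter_EG_classify_TGsel_ne_labG G S
  refine ⟨fun e he => ?_, ?_⟩
  · have h_mem := Finset.ext_iff.1 h_filter e
    simpa only [Finset.mem_filter, he, true_and, Finset.mem_image, and_assoc, eq_comm] using h_mem
  · rw [errCount, h_filter, Finset.card_image_of_injective _ edgeEx_injective]
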